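/- The sequence of left A-module homomorphisms 0 → A → A³ → A³ → A → k → 0 is exact, where the maps are: f₁ : A → A³, p ↦ (p·b, p·a, p·c); f₂ : A³ → A³, (p,q,r) ↦ (p,q,r)·M given by right multiplication by the matrix M = [[−c, 0, −a], [0, c, b], [−b, a, −2c²]] (i.e. the image is (−pc − rb, qc + ra, −pa + qb − 2rc²)); f₃ : A³ → A, (p,q,r) ↦ p·a + q·b + r·c; and ε : A → k the augmentation sending a, b, c to 0. Exactness means: f₁ is injective, the range of f₁ equals the kernel of f₂, the range of f₂ equals the kernel of f₃, the range of f₃ equals the kernel of ε, and ε is surjective. -/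

import Mathlib

/-- The relations `ac + ca = 0`, `bc + cb = 0`, `ab - ba - 2c³ = 0` on the free
associative algebra `k⟨a,b,c⟩`; quotienting by the ring congruence they generate
is the quotient by the two-sided ideal generated by these three elements. -/
inductive CdvRel (k : Type*) [Field k] :
    FreeAlgebra k (Fin 3) → FreeAlgebra k (Fin 3) → Prop
  | ac : CdvRel k (FreeAlgebra.ι k 0 * FreeAlgebra.ι k 2
      + FreeAlgebra.ι k 2 * FreeAlgebra.ι k 0) 0
  | bc : CdvRel k (FreeAlgebra.ι k 1 * FreeAlgebra.ι k 2
      + FreeAlgebra.ι k 2 * FreeAlgebra.ι k 1) 0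
  | ab : CdvRel k (FreeAlgebra.ι k 0 * FreeAlgebra.ι k 1
      - FreeAlgebra.ι k 1 * FreeAlgebra.ι k 0 - 2 * FreeAlgebra.ι k 2 ^ 3) 0

/-- The algebra `A = k⟨a,b,c⟩/(ac + ca, bc + cb, ab - ba - 2c³)`. -/
abbrev CdvAlgebra (k : Type*) [Field k] : Type _ := RingQuot (CdvRel k)

/-- The images of the generators `a`, `b`, `c` in `A`. -/
noncomputable def cdvGen (k : Type*) [Field k] (i : Fin 3) : CdvAlgebra k :=
  RingQuot.mkAlgHom k (CdvRel k) (FreeAlgebra.ι k i)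


namespace CdvAux

open MvPolynomial


section generic

variable {k : Type*} [Field k] {A : Type*} [Ring A] {a b c : A}

lemma two_sum (x : A) : 2 * x = x + x := two_mul x

lemma sg_ab (hab : a * b = b * a + 2 * c ^ 3) :
    -a * -b - -b * -a - (c ^ 3 + c ^ 3) = 0 := by
  rw [neg_mul_neg, neg_mul_neg, hab, two_mul]
  abel

lemma sg_xc {x : A} (h : x * c = - (c * x)) : -x * c + c * -x = 0 := by
  rw [neg_mul, h, mul_neg]
  abel

lemma sg_xc' {x : A} (h : x * c = - (c * x)) : x * c = c * -x := by
  rw [h, mul_neg]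

lemma exact_generic (hac : a * c = - (c * a)) (hbc : b * c = - (c * b))
    (hab : a * b = b * a + 2 * c ^ 3)
    (reg : ∀ x y : A, x * c = y * c → x = y)
    (π : A →+* MvPolynomial (Fin 2) k) (hπ : Function.Surjective π)
    (hk : ∀ x, π x = 0 → ∃ y, x = y * c)
    (pr0 : π a = MvPolynomial.X 0) (pr1 : π b = MvPolynomial.X 1) (pr2 : π c = 0)
    (kos : ∀ f g : MvPolynomial (Fin 2) k, f * X 0 + g * X 1 = 0 →
      ∃ r, f = -(r * X 1) ∧ g = r * X 0) :
    letI f₁ : A → (Fin 3 → A) := fun p => ![p * b, p * a, p * c]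
    letI f₂ : (Fin 3 → A) → (Fin 3 → A) :=
      fun v => ![-(v 0 * c) - v 2 * b, v 1 * c + v 2 * a,
        -(v 0 * a) + v 1 * b - 2 * (v 2 * c ^ 2)]
    letI f₃ : (Fin 3 → A) → A :=
      fun v => v 0 * a + v 1 * b + v 2 * c
    IsLinearMap A f₁ ∧ IsLinearMap A f₂ ∧
    IsLinearMap A f₃ ∧
    Function.Injective f₁ ∧
    Set.range f₁ = {v | f₂ v = 0} ∧
    Set.range f₂ = {v | f₃ v = 0} := by
  have hcc : c ^ 2 * c = c ^ 3 := (pow_succ c 2).symm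
  have comp32 : ∀ p q r : A, (-(p * c) - r * b) * a
      + (q * c + r * a) * b + (-(p * a) + q * b - 2 * (r * c ^ 2)) * c = 0 := by
    intro p q r
    simp only [sub_mul, add_mul, neg_mul, mul_assoc, hac, hbc, hab, hcc, two_mul, mul_add, mul_neg]
    abel
  refine ⟨⟨?_, ?_⟩, ⟨?_, ?_⟩, ⟨?_, ?_⟩, ?_, ?_, ?_⟩
  · intro x y
    ext i
    fin_cases i <;> simp [add_mul]
  · intro x y
    ext i
    fin_cases i <;> simp [mul_assoc]
  · intro x y
    ext i
    fin_cases i <;> simp [add_mul, two_mul] <;> abel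
  · intro x y
    ext i
    fin_cases i <;> simp [mul_assoc, mul_add, mul_sub, two_mul]
  · intro x y
    simp [add_mul]
    abel
  · intro x y
    simp [mul_assoc, mul_add]
  · intro p q h
    apply reg
    simpa using congrFun h 2
  · ext v
    simp only [Set.mem_range, Set.mem_setOf_eq]
    constructor
    · rintro ⟨p, rfl⟩
      ext i
      fin_cases i
      · simp [mul_assoc, hbc]
      · simp [mul_assoc, hac]
      · simp only [Fin.reduceFinMk, Matrix.cons_val, Pi.zero_apply]
        rw [mul_assoc, mul_assoc, mul_assoc, hab, ← pow_succ', two_mul, two_mul]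
        simp only [mul_add]
        abel
    · intro h
      have h0 : -(v 0 * c) - v 2 * b = 0 := congrFun h 0
      have h1 : v 1 * c + v 2 * a = 0 := congrFun h 1
      have hz : π (v 2) * X 1 = 0 := by
        have := congrArg π h0
        simpa [pr1, pr2] using this
      have hz' : π (v 2) = 0 := by
        rcases mul_eq_zero.1 hz with h | h
        · exact h
        · exact absurd h (MvPolynomial.X_ne_zero 1)
      obtain ⟨p, hp⟩ := hk _ hz'
      rw [hp, mul_assoc] at h0 h1
      have e0 : p * b = v 0 := by
        apply reg
        rw [mul_assoc, hbc, mul_neg, ← sub_eq_zero, ← h0]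
        abel
      have e1 : p * a = v 1 := by
        apply reg
        rw [mul_assoc, hac, mul_neg, neg_eq_iff_add_eq_zero, ← h1]
        abel
      refine ⟨p, ?_⟩
      ext i
      fin_cases i
      · exact e0
      · exact e1
      · exact hp.symm
  · ext v
    simp only [Set.mem_range, Set.mem_setOf_eq]
    constructor
    · rintro ⟨w, rfl⟩
      exact comp32 (w 0) (w 1) (w 2)
    · intro h
      have hz : π (v 0) * X 0 + π (v 1) * X 1 = 0 := by
        have := congrArg π h
        simpa [pr0, pr1, pr2] using this
      obtain ⟨f, hf0, hf1⟩ := kos _ _ hz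
      obtain ⟨r, rfl⟩ := hπ f
      obtain ⟨p, hp⟩ := hk (v 0 + r * b) (by rw [map_add, hf0, map_mul, pr1]; ring)
      obtain ⟨q, hq⟩ := hk (v 1 - r * a) (by rw [map_sub, hf1, map_mul, pr0]; ring)
      have e0 : -(-p * c) - r * b = v 0 := by
        rw [neg_mul, neg_neg, ← hp]; abel
      have e1 : q * c + r * a = v 1 := by
        rw [← hq]; abel
      refine ⟨![-p, q, r], ?_⟩
      ext i
      fin_cases i
      · exact e0
      · exact e1
      · apply reg
        have h3 := comp32 (-p) q r
        rw [e0, e1, ← h] at h3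
        exact add_left_cancel h3

end generic

variable (k : Type*) [Field k]

/-- The vector space with basis the normal words `c^i a^j b^l`. -/
abbrev V := (ℕ × ℕ × ℕ) →₀ k

/-- The normal word `c^i a^j b^l`. -/
noncomputable def e (i j l : ℕ) : V k := Finsupp.single (i, j, l) 1

noncomputable def La : V k →ₗ[k] V k :=
  Finsupp.linearCombination k (fun m => (-1 : k) ^ m.1 • e k m.1 (m.2.1 + 1) m.2.2)

noncomputable def Lc : V k →ₗ[k] V k :=
  Finsupp.linearCombination k (fun m => e k (m.1 + 1) m.2.1 m.2.2)

noncomputable def Lb : V k →ₗ[k] V k :=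
  Finsupp.linearCombination k (fun m => (-1 : k) ^ m.1 • e k m.1 m.2.1 (m.2.2 + 1)
    - ((-1 : k) ^ m.1 * (1 - (-1) ^ m.2.1)) • e k (m.1 + 3) (m.2.1 - 1) m.2.2)

lemma La_e (i j l : ℕ) : La k (e k i j l) = (-1 : k) ^ i • e k i (j + 1) l := by
  simp [La, e]

lemma Lc_e (i j l : ℕ) : Lc k (e k i j l) = e k (i + 1) j l := by
  simp [Lc, e]

lemma Lb_e (i j l : ℕ) : Lb k (e k i j l) = (-1 : k) ^ i • e k i j (l + 1)
    - ((-1 : k) ^ i * (1 - (-1) ^ j)) • e k (i + 3) (j - 1) l := by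
  rw [e, Lb, Finsupp.linearCombination_single, one_smul]

lemma V_ext {M : Type*} [AddCommGroup M] [Module k M] {f g : V k →ₗ[k] M}
    (h : ∀ i j l, f (e k i j l) = g (e k i j l)) : f = g := by
  apply Finsupp.lhom_ext'
  rintro ⟨i, j, l⟩
  apply LinearMap.ext_ring
  exact h i j l

lemma Lc_inj : Function.Injective (Lc k) := by
  have h : Lc k = Finsupp.lmapDomain k k (fun m : ℕ × ℕ × ℕ => (m.1 + 1, m.2.1, m.2.2)) := by
    apply V_ext
    intro i j l
    rw [Lc_e]
    simp [e]
  rw [h]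
  apply Finsupp.mapDomain_injective
  rintro ⟨i, j, l⟩ ⟨i', j', l'⟩ h
  simpa using h

lemma rel_ac : La k * Lc k + Lc k * La k = 0 := by
  apply V_ext
  intro i j l
  simp only [LinearMap.add_apply, Module.End.mul_apply, La_e, Lc_e, map_smul, LinearMap.zero_apply]
  rw [← add_smul]
  simp [pow_succ]

lemma rel_bc : Lb k * Lc k + Lc k * Lb k = 0 := by
  apply V_ext
  intro i j l
  simp only [LinearMap.add_apply, Module.End.mul_apply, Lb_e, Lc_e, map_smul, map_sub,
    LinearMap.zero_apply]
  rw [show i + 1 + 3 = i + 3 + 1 by ring]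
  module

lemma rel_ab : La k * Lb k - Lb k * La k - 2 * Lc k ^ 3 = 0 := by
  apply V_ext
  intro i j l
  have h2 : (2 : Module.End k (V k)) * Lc k ^ 3 = Lc k ^ 3 + Lc k ^ 3 := two_mul _
  rw [h2]
  simp only [LinearMap.sub_apply, LinearMap.add_apply, Module.End.mul_apply, pow_succ, pow_zero,
    one_mul, La_e, Lb_e, Lc_e, map_smul, map_sub, LinearMap.zero_apply]
  have hs : (-1 : k) ^ i * (-1) ^ i = 1 := by rw [← mul_pow]; simp
  rcases j with _ | j
  · simp only [smul_sub, smul_smul, pow_succ, pow_zero, Nat.zero_add, Nat.zero_sub]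
    match_scalars <;> first | ring1 | linear_combination 2 * hs
  · simp only [smul_sub, smul_smul, Nat.add_sub_cancel, pow_succ]
    match_scalars
    · ring
    · linear_combination 2 * hs

/-- The representation of the algebra on normal words. -/
noncomputable def rho : CdvAlgebra k →ₐ[k] Module.End k (V k) :=
  RingQuot.liftAlgHom k ⟨FreeAlgebra.lift k ![La k, Lb k, Lc k], by
    intro x y h
    cases h with
    | ac => simpa using rel_ac k
    | bc => simpa using rel_bc k
    | ab =>
      have := rel_ab k
      rw [two_sum] at this ⊢
      simpa using this⟩

lemma rho_gen (i : Fin 3) : rho k (cdvGen k i) = ![La k, Lb k, Lc k] i := by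
  simp only [rho, cdvGen, RingQuot.liftAlgHom_mkAlgHom_apply, FreeAlgebra.lift_ι_apply]

lemma gen_ac : cdvGen k 0 * cdvGen k 2 = - (cdvGen k 2 * cdvGen k 0) := by
  have := RingQuot.mkAlgHom_rel k (CdvRel.ac (k := k))
  simp only [map_add, map_mul, map_zero] at this
  exact eq_neg_of_add_eq_zero_left this

lemma gen_bc : cdvGen k 1 * cdvGen k 2 = - (cdvGen k 2 * cdvGen k 1) := by
  have := RingQuot.mkAlgHom_rel k (CdvRel.bc (k := k))
  simp only [map_add, map_mul, map_zero] at this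
  exact eq_neg_of_add_eq_zero_left this

lemma gen_ab : cdvGen k 0 * cdvGen k 1 = cdvGen k 1 * cdvGen k 0 + 2 * cdvGen k 2 ^ 3 := by
  have := RingQuot.mkAlgHom_rel k (CdvRel.ab (k := k))
  simp only [map_sub, map_mul, map_zero, map_pow, map_ofNat] at this
  have h := eq_add_of_sub_eq (sub_eq_zero.1 this)
  rw [add_comm] at h
  exact h

lemma gen_induction {P : CdvAlgebra k → Prop} (hk : ∀ r : k, P (algebraMap k _ r))
    (hg : ∀ i, P (cdvGen k i)) (hadd : ∀ x y, P x → P y → P (x + y))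
    (hmul : ∀ x y, P x → P y → P (x * y)) (x : CdvAlgebra k) : P x := by
  obtain ⟨y, rfl⟩ := RingQuot.mkAlgHom_surjective k (CdvRel k) x
  induction y using FreeAlgebra.induction with
  | grade0 r => rw [AlgHom.commutes]; exact hk r
  | grade1 i => exact hg i
  | mul x y hx hy => rw [map_mul]; exact hmul _ _ hx hy
  | add x y hx hy => rw [map_add]; exact hadd _ _ hx hy

section words

variable {k} {A : Type*} [Ring A] [Algebra k A] {a b c : A}

lemma x_cpow {x : A} (h : x * c = - (c * x)) (i : ℕ) :
    x * c ^ i = (-1 : k) ^ i • (c ^ i * x) := by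
  induction i with
  | zero => simp
  | succ i ih =>
    rw [pow_succ, ← mul_assoc, ih, smul_mul_assoc, mul_assoc, h, pow_succ]
    simp [mul_assoc]

lemma b_apow (hac : a * c = - (c * a)) (hab : a * b = b * a + 2 * c ^ 3) (j : ℕ) :
    b * a ^ j = a ^ j * b - (1 - (-1 : k) ^ j) • (c ^ 3 * a ^ (j - 1)) := by
  have hba : b * a = a * b - 2 * c ^ 3 := by rw [hab]; abel
  have h3 : a * c ^ 3 = - (c ^ 3 * a) := by
    rw [x_cpow (k := k) hac]
    have : (-1 : k) ^ 3 = -1 := by norm_num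
    rw [this, neg_one_smul]
  induction j with
  | zero => simp
  | succ j ih =>
    have key : b * a ^ (j + 1) = a * (b * a ^ j) - (2 : k) • (c ^ 3 * a ^ j) := by
      rw [pow_succ', ← mul_assoc, hba, sub_mul, mul_assoc, two_smul, two_mul, add_mul]
    rw [key, ih, mul_sub, mul_smul_comm, ← mul_assoc a (c ^ 3), h3, Nat.add_sub_cancel,
      ← mul_assoc, ← pow_succ', neg_mul, mul_assoc]
    rcases j with _ | j
    · simp
      norm_num
    · rw [Nat.add_sub_cancel, ← pow_succ', pow_succ (-1 : k) (j + 1)]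
      module

end words

/-- Evaluation of normal words in the algebra. -/
noncomputable def s : V k →ₗ[k] CdvAlgebra k :=
  Finsupp.linearCombination k
    (fun m => cdvGen k 2 ^ m.1 * (cdvGen k 0 ^ m.2.1 * cdvGen k 1 ^ m.2.2))

lemma s_e (i j l : ℕ) : s k (e k i j l) = cdvGen k 2 ^ i * (cdvGen k 0 ^ j * cdvGen k 1 ^ l) := by
  simp [s, e]

lemma s_gen (i : Fin 3) (v : V k) : s k (![La k, Lb k, Lc k] i v) = cdvGen k i * s k v := by
  have : s k ∘ₗ (![La k, Lb k, Lc k] i) = LinearMap.mulLeft k (cdvGen k i) ∘ₗ s k := by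
    apply V_ext
    intro p q r
    simp only [LinearMap.comp_apply, LinearMap.mulLeft_apply, s_e]
    fin_cases i
    · simp only [Fin.zero_eta, Matrix.cons_val_zero, La_e, map_smul, s_e]
      rw [← mul_assoc (cdvGen k 0), x_cpow (k := k) (gen_ac k), smul_mul_assoc, pow_succ']
      simp only [mul_assoc]
    · simp only [Fin.mk_one, Matrix.cons_val_one, Matrix.cons_val_zero, Lb_e, map_smul, map_sub,
        s_e]
      rw [← mul_assoc (cdvGen k 1), x_cpow (k := k) (gen_bc k), smul_mul_assoc, mul_assoc,
        ← mul_assoc (cdvGen k 1), b_apow (k := k) (gen_ac k) (gen_ab k), sub_mul,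
        mul_sub (cdvGen k 2 ^ p), smul_sub, mul_smul, smul_mul_assoc, mul_smul_comm, pow_succ' (cdvGen k 1), pow_add]
      simp only [mul_assoc]
    · simp only [Fin.reduceFinMk, Matrix.cons_val, Lc_e, s_e]
      rw [pow_succ', mul_assoc]
  exact LinearMap.congr_fun this v

lemma s_rho (x : CdvAlgebra k) : ∀ v, s k (rho k x v) = x * s k v := by
  induction x using gen_induction with
  | hk r => intro v; rw [AlgHom.commutes, Module.algebraMap_end_apply, map_smul, Algebra.smul_def]
  | hg i => intro v; rw [rho_gen, s_gen]
  | hadd x y hx hy => intro v; rw [map_add, LinearMap.add_apply, map_add, hx, hy, add_mul]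
  | hmul x y hx hy => intro v; rw [map_mul, Module.End.mul_apply, hx, hy, mul_assoc]

lemma s_rho_one (x : CdvAlgebra k) : s k (rho k x (e k 0 0 0)) = x := by
  rw [s_rho, s_e]; simp

lemma c_left_reg {x : CdvAlgebra k} (h : cdvGen k 2 * x = 0) : x = 0 := by
  have h1 : rho k (cdvGen k 2 * x) (e k 0 0 0) = 0 := by rw [h]; simp
  rw [map_mul, Module.End.mul_apply, rho_gen] at h1
  have h2 : Lc k (rho k x (e k 0 0 0)) = Lc k 0 := by rw [map_zero]; exact h1
  rw [← s_rho_one k x, Lc_inj k h2, map_zero]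

/-- The sign automorphism. -/
noncomputable def sg : CdvAlgebra k →ₐ[k] CdvAlgebra k :=
  RingQuot.liftAlgHom k ⟨FreeAlgebra.lift k ![-cdvGen k 0, -cdvGen k 1, cdvGen k 2], by
    intro x y h
    cases h with
    | ac => simpa using sg_xc (gen_ac k)
    | bc => simpa using sg_xc (gen_bc k)
    | ab =>
      rw [two_sum]
      simpa using sg_ab (gen_ab k)⟩

lemma sg_gen (i : Fin 3) : sg k (cdvGen k i) = ![-cdvGen k 0, -cdvGen k 1, cdvGen k 2] i := by
  simp only [sg, cdvGen, RingQuot.liftAlgHom_mkAlgHom_apply, FreeAlgebra.lift_ι_apply]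

lemma sg_sg (x : CdvAlgebra k) : sg k (sg k x) = x := by
  induction x using gen_induction with
  | hk r => simp only [AlgHom.commutes]
  | hg i => fin_cases i <;> simp [sg_gen]
  | hadd x y hx hy => rw [map_add, map_add, hx, hy]
  | hmul x y hx hy => rw [map_mul, map_mul, hx, hy]

lemma mul_c (x : CdvAlgebra k) : x * cdvGen k 2 = cdvGen k 2 * sg k x := by
  induction x using gen_induction with
  | hk r => rw [AlgHom.commutes, Algebra.commutes]
  | hg i =>
    rw [sg_gen]
    fin_cases i
    · exact sg_xc' (gen_ac k)
    · exact sg_xc' (gen_bc k)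
    · rfl
  | hadd x y hx hy => rw [map_add, mul_add, add_mul, hx, hy]
  | hmul x y hx hy => rw [map_mul, mul_assoc, hy, ← mul_assoc, hx, mul_assoc]

lemma c_right_reg {x : CdvAlgebra k} (h : x * cdvGen k 2 = 0) : x = 0 := by
  rw [mul_c] at h
  rw [← sg_sg k x, c_left_reg k h, map_zero]

lemma reg (x y : CdvAlgebra k) (h : x * cdvGen k 2 = y * cdvGen k 2) : x = y := by
  apply sub_eq_zero.1
  apply c_right_reg k
  rw [sub_mul, h, sub_self]

/-- Reduction modulo `c`. -/
noncomputable def pr : CdvAlgebra k →ₐ[k] MvPolynomial (Fin 2) k :=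
  RingQuot.liftAlgHom k ⟨FreeAlgebra.lift k ![X 0, X 1, 0], by
    intro x y h
    cases h with
    | ac => simp
    | bc => simp
    | ab => simp [mul_comm]⟩

lemma pr_gen (i : Fin 3) : pr k (cdvGen k i) = ![X 0, X 1, 0] i := by
  simp only [pr, cdvGen, RingQuot.liftAlgHom_mkAlgHom_apply, FreeAlgebra.lift_ι_apply]

/-- A linear section of the reduction. -/
noncomputable def sec : MvPolynomial (Fin 2) k →ₗ[k] CdvAlgebra k :=
  (basisMonomials (Fin 2) k).constr k (fun m => cdvGen k 0 ^ m 0 * cdvGen k 1 ^ m 1)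

lemma sec_word (j l : ℕ) : sec k (X 0 ^ j * X 1 ^ l) = cdvGen k 0 ^ j * cdvGen k 1 ^ l := by
  have h : (X 0 ^ j * X 1 ^ l : MvPolynomial (Fin 2) k) =
      basisMonomials (Fin 2) k (Finsupp.single 0 j + Finsupp.single 1 l) := by
    rw [coe_basisMonomials, X_pow_eq_monomial, X_pow_eq_monomial, monomial_mul, one_mul]
  rw [h, sec, Module.Basis.constr_basis]
  simp

lemma mod_c (x : CdvAlgebra k) : ∃ y, x = sec k (pr k x) + y * cdvGen k 2 := by
  have key : ∀ v : V k, ∃ y, s k v = sec k (pr k (s k v)) + y * cdvGen k 2 := by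
    intro v
    induction v using Finsupp.induction_linear with
    | zero => exact ⟨0, by simp⟩
    | add v w hv hw =>
      obtain ⟨y, hy⟩ := hv
      obtain ⟨z, hz⟩ := hw
      refine ⟨y + z, ?_⟩
      simp only [map_add, add_mul]
      nth_rewrite 1 [hy, hz]
      abel
    | single m r =>
      obtain ⟨i, j, l⟩ := m
      have h1 : (Finsupp.single (i, j, l) r : V k) = r • e k i j l := by simp [e]
      rw [h1]
      simp only [map_smul, s_e]
      rcases i with _ | i
      · refine ⟨0, ?_⟩
        simp only [pow_zero, one_mul, map_mul, map_pow, pr_gen, zero_mul, add_zero]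
        congr 1
        exact (sec_word k j l).symm
      · refine ⟨r • sg k (cdvGen k 2 ^ i * (cdvGen k 0 ^ j * cdvGen k 1 ^ l)), ?_⟩
        rw [smul_mul_assoc, mul_c, sg_sg, pow_succ', mul_assoc, map_mul, pr_gen]
        simp
  have := key (rho k x (e k 0 0 0))
  rwa [s_rho_one] at this

lemma ker_pr {x : CdvAlgebra k} (h : pr k x = 0) : ∃ y, x = y * cdvGen k 2 := by
  obtain ⟨y, hy⟩ := mod_c k x
  rw [h, map_zero, zero_add] at hy
  exact ⟨y, hy⟩

lemma pr_surj (f : MvPolynomial (Fin 2) k) : ∃ x, pr k x = f := by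
  induction f using MvPolynomial.induction_on with
  | C r => exact ⟨algebraMap k _ r, by rw [AlgHom.commutes]; rfl⟩
  | add f g hf hg =>
    obtain ⟨x, rfl⟩ := hf
    obtain ⟨y, rfl⟩ := hg
    exact ⟨x + y, map_add _ _ _⟩
  | mul_X f i hf =>
    obtain ⟨x, rfl⟩ := hf
    fin_cases i
    · exact ⟨x * cdvGen k 0, by rw [map_mul, pr_gen]; rfl⟩
    · exact ⟨x * cdvGen k 1, by rw [map_mul, pr_gen]; rfl⟩

lemma koszul {f g : MvPolynomial (Fin 2) k} (h : f * X 0 + g * X 1 = 0) :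
    ∃ r, f = -(r * X 1) ∧ g = r * X 0 := by
  have hp : Prime (X 0 : MvPolynomial (Fin 2) k) := MvPolynomial.X_prime
  have hd : (X 0 : MvPolynomial (Fin 2) k) ∣ g * X 1 := ⟨-f, by linear_combination h⟩
  rcases hp.dvd_or_dvd hd with ⟨r, hr⟩ | hx
  · refine ⟨r, ?_, by rw [hr, mul_comm]⟩
    apply mul_right_cancel₀ hp.ne_zero
    rw [hr] at h
    linear_combination h
  · rw [X_dvd_X] at hx
    simp at hx

lemma aug_decomp (ε : CdvAlgebra k →ₐ[k] k)
    (hε : ∀ i, ε (cdvGen k i) = 0) (x : CdvAlgebra k) :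
    ∃ p q r, x = algebraMap k _ (ε x) + (p * cdvGen k 0 + q * cdvGen k 1 + r * cdvGen k 2) := by
  induction x using gen_induction with
  | hk t => exact ⟨0, 0, 0, by simp⟩
  | hg i =>
    rw [hε]
    fin_cases i
    · exact ⟨1, 0, 0, by simp⟩
    · exact ⟨0, 1, 0, by simp⟩
    · exact ⟨0, 0, 1, by simp⟩
  | hadd x y hx hy =>
    obtain ⟨p, q, r, h⟩ := hx
    obtain ⟨p', q', r', h'⟩ := hy
    refine ⟨p + p', q + q', r + r', ?_⟩
    rw [map_add, map_add]
    nth_rewrite 1 [h, h']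
    simp only [add_mul]
    abel
  | hmul x y hx hy =>
    obtain ⟨p, q, r, h⟩ := hx
    obtain ⟨p', q', r', h'⟩ := hy
    refine ⟨ε y • p + x * p', ε y • q + x * q', ε y • r + x * r', ?_⟩
    have h1 : x * y = ε y • x + x * (p' * cdvGen k 0 + q' * cdvGen k 1 + r' * cdvGen k 2) := by
      nth_rewrite 1 [h']
      rw [mul_add, Algebra.smul_def, Algebra.commutes]
    have h2 : ε y • x = algebraMap k _ (ε (x * y)) +
        ε y • (p * cdvGen k 0 + q * cdvGen k 1 + r * cdvGen k 2) := by
      nth_rewrite 1 [h]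
      rw [smul_add, map_mul, mul_comm (ε x), map_mul, Algebra.smul_def]
    generalize ε (x * y) = t at *
    rw [h1, h2]
    simp only [add_mul, mul_add, smul_add, smul_mul_assoc, mul_assoc]
    abel

end CdvAux

/-- The sequence `0 → A → A³ → A³ → A → k → 0` of left `A`-module homomorphisms
`f₁ : p ↦ (pb, pa, pc)`, `f₂ : (p,q,r) ↦ (-pc - rb, qc + ra, -pa + qb - 2rc²)`
(right multiplication by the matrix `[[-c,0,-a],[0,c,b],[-b,a,-2c²]]`),
`f₃ : (p,q,r) ↦ pa + qb + rc`, and the augmentation `ε` (sending `a,b,c ↦ 0`)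
is exact: `f₁` is injective, `range f₁ = ker f₂`, `range f₂ = ker f₃`,
`range f₃ = ker ε`, and `ε` is surjective. -/
theorem cdv_free_resolution_exact (k : Type*) [Field k] [CharZero k]
    (ε : CdvAlgebra k →ₐ[k] k)
    (hεa : ε (cdvGen k 0) = 0) (hεb : ε (cdvGen k 1) = 0)
    (hεc : ε (cdvGen k 2) = 0) :
    letI a := cdvGen k 0
    letI b := cdvGen k 1
    letI c := cdvGen k 2
    letI f₁ : CdvAlgebra k → (Fin 3 → CdvAlgebra k) :=
      fun p => ![p * b, p * a, p * c]
    letI f₂ : (Fin 3 → CdvAlgebra k) → (Fin 3 → CdvAlgebra k) :=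
      fun v => ![-(v 0 * c) - v 2 * b, v 1 * c + v 2 * a,
        -(v 0 * a) + v 1 * b - 2 * (v 2 * c ^ 2)]
    letI f₃ : (Fin 3 → CdvAlgebra k) → CdvAlgebra k :=
      fun v => v 0 * a + v 1 * b + v 2 * c
    IsLinearMap (CdvAlgebra k) f₁ ∧ IsLinearMap (CdvAlgebra k) f₂ ∧
    IsLinearMap (CdvAlgebra k) f₃ ∧
    Function.Injective f₁ ∧
    Set.range f₁ = {v | f₂ v = 0} ∧
    Set.range f₂ = {v | f₃ v = 0} ∧
    Set.range f₃ = {x | ε x = 0} ∧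
    Function.Surjective ε := by
  have hε : ∀ i, ε (cdvGen k i) = 0 := by
    intro i
    fin_cases i
    · exact hεa
    · exact hεb
    · exact hεc
  obtain ⟨h1, h2, h3, h4, h5, h6⟩ := CdvAux.exact_generic (k := k) (CdvAux.gen_ac k)
    (CdvAux.gen_bc k) (CdvAux.gen_ab k) (CdvAux.reg k) (CdvAux.pr k).toRingHom (CdvAux.pr_surj k)
    (fun x h => CdvAux.ker_pr k h) (CdvAux.pr_gen k 0) (CdvAux.pr_gen k 1) (CdvAux.pr_gen k 2)
    (fun f g h => CdvAux.koszul k h)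
  refine ⟨h1, h2, h3, h4, h5, h6, ?_, ?_⟩
  · ext x
    simp only [Set.mem_range, Set.mem_setOf_eq]
    constructor
    · rintro ⟨v, rfl⟩
      simp only [map_add, map_mul, hε, mul_zero, add_zero]
    · intro hx
      obtain ⟨p, q, r, h⟩ := CdvAux.aug_decomp k ε hε x
      rw [hx, map_zero, zero_add] at h
      exact ⟨![p, q, r], h.symm⟩
  · intro r
    exact ⟨algebraMap k _ r, by rw [AlgHom.commutes]; rfl⟩
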